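/- arXiv:2204.08419 — 2 statements merged into one kernel-verified Lean document; each statement's English description precedes it below -/
import Mathlib

section
/- Let (F,G) be a dual pair of N-element families (N ≥ 2) in an n-dimensional complex Hilbert space H with weight numbers (q_i). Assume every ⟨g_i, f_i⟩ is real and nonnegative, and that there is a real constant c > 0 with q_i q_j ⟨g_j, f_i⟩⟨g_i, f_j⟩ = c for all i ≠ j. Set R_1 = max_{1 ≤ i ≤ N} q_i ⟨g_i, f_i⟩ and ζ = { i : q_i ⟨g_i, f_i⟩ = R_1 }. If ζ contains at least two elements, then R_2^p(F,G) = R_1 + √c. -/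
/-!
Put `aᵢ = qᵢ ⟪Fᵢ, Gᵢ⟫`, `u = qᵢ ⟪Fᵢ, Gⱼ⟫` and `v = qⱼ ⟪Fⱼ, Gᵢ⟫`, so that `u v = c`.  The nonzero
eigenvalues of the rank-two operator `E i j` are eigenvalues of the matrix `!![aᵢ, u; v, aⱼ]`, hence
satisfy `(z - aᵢ) (z - aⱼ) = c` (`eigenvalue_equation`).

If `‖z‖ > R₁ + √c`, both factors have modulus larger than `√c` because `0 ≤ aᵢ, aⱼ ≤ R₁`, which is
impossible; this bounds every spectral radius by `R₁ + √c`.  If `aᵢ = aⱼ = R₁`, then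
`u • Gᵢ + √c • Gⱼ` is an eigenvector with eigenvalue `R₁ + √c`, so the bound is attained on any pair
of distinct indices in `ζ`.
-/

open scoped InnerProductSpace ENNReal

/-- In finite dimension the spectrum consists of the eigenvalues, since an injective endomorphism
is invertible. -/
lemma mem_spectrum_iff_exists_eigenvector {H : Type*} [NormedAddCommGroup H]
    [InnerProductSpace ℂ H] [FiniteDimensional ℂ H] (T : H →L[ℂ] H) (z : ℂ) :
    z ∈ spectrum ℂ T ↔ ∃ f : H, f ≠ 0 ∧ T f = z • f := by
  have : CompleteSpace H := FiniteDimensional.complete ℂ H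
  rw [spectrum.mem_iff, ContinuousLinearMap.isUnit_iff_bijective]
  set S : H →L[ℂ] H := algebraMap ℂ (H →L[ℂ] H) z - T with hS
  have hSf : ∀ f, S f = z • f - T f := fun f => by
    simp [hS, Algebra.algebraMap_eq_smul_one]
  constructor
  · intro h
    by_contra! hne
    apply h
    have hinj : Function.Injective (S : H →ₗ[ℂ] H) := by
      rw [injective_iff_map_eq_zero]
      intro f hf
      by_contra hf0
      refine hne f hf0 ?_
      have h1 : S f = 0 := hf
      rw [hSf, sub_eq_zero] at h1
      exact h1.symm
    exact ⟨hinj, LinearMap.injective_iff_surjective.mp hinj⟩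
  · rintro ⟨f, hf0, hf⟩ h
    apply hf0
    apply h.1
    rw [hSf, hf, sub_self, map_zero]

/-- The characteristic equation of the matrix `!![a, u; v, b]`, where `u * v = c`, representing a
two-term operator on the span of `g₁, g₂`; only its nonzero eigenvalues are seen by this matrix. -/
lemma eigenvalue_equation {H : Type*} [NormedAddCommGroup H] [InnerProductSpace ℂ H]
    {f₁ f₂ g₁ g₂ f : H} {q₁ q₂ a b c z : ℂ}
    (ha : q₁ * ⟪f₁, g₁⟫_ℂ = a) (hb : q₂ * ⟪f₂, g₂⟫_ℂ = b)
    (hc : q₁ * q₂ * ⟪f₁, g₂⟫_ℂ * ⟪f₂, g₁⟫_ℂ = c) (hf : f ≠ 0) (hz : z ≠ 0)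
    (h : (q₁ * ⟪f₁, f⟫_ℂ) • g₁ + (q₂ * ⟪f₂, f⟫_ℂ) • g₂ = z • f) :
    (z - a) * (z - b) = c := by
  have h1 := congrArg (fun t => q₁ * ⟪f₁, t⟫_ℂ) h
  have h2 := congrArg (fun t => q₂ * ⟪f₂, t⟫_ℂ) h
  simp only [inner_add_right, inner_smul_right] at h1 h2
  set x := q₁ * ⟪f₁, f⟫_ℂ with hx
  set y := q₂ * ⟪f₂, f⟫_ℂ with hy
  have e1 : (z - a) * x = q₁ * ⟪f₁, g₂⟫_ℂ * y := by
    linear_combination -h1 + x * ha + z * hx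
  have e2 : (z - b) * y = q₂ * ⟪f₂, g₁⟫_ℂ * x := by
    linear_combination -h2 + y * hb + z * hy
  have hX : ((z - a) * (z - b) - c) * x = 0 := by
    linear_combination (z - b) * e1 + q₁ * ⟪f₁, g₂⟫_ℂ * e2 + x * hc
  have hY : ((z - a) * (z - b) - c) * y = 0 := by
    linear_combination (z - a) * e2 + q₂ * ⟪f₂, g₁⟫_ℂ * e1 + y * hc
  by_contra hne
  have hne' : (z - a) * (z - b) - c ≠ 0 := sub_ne_zero.mpr hne
  have hx0 := (mul_eq_zero.mp hX).resolve_left hne'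
  have hy0 := (mul_eq_zero.mp hY).resolve_left hne'
  rw [hx0, hy0, zero_smul, zero_smul, add_zero] at h
  exact (smul_ne_zero hz hf) h.symm

lemma norm_le_of_mul_eq {a b R c : ℝ} {z : ℂ} (ha : 0 ≤ a) (hb : 0 ≤ b) (haR : a ≤ R)
    (hbR : b ≤ R) (hc : 0 ≤ c) (h : (z - a) * (z - b) = c) : ‖z‖ ≤ R + √c := by
  by_contra! hlt
  have key : ∀ t : ℝ, 0 ≤ t → t ≤ R → √c < ‖z - t‖ := fun t ht htR => by
    have h1 := norm_sub_norm_le z (t : ℂ)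
    rw [Complex.norm_of_nonneg ht] at h1
    linarith
  have hn := congrArg norm h
  rw [norm_mul, Complex.norm_of_nonneg hc] at hn
  have := mul_lt_mul'' (key a ha haR) (key b hb hbR) (Real.sqrt_nonneg c) (Real.sqrt_nonneg c)
  rw [Real.mul_self_sqrt hc] at this
  linarith


/-- Let `(F,G)` be a dual pair (`N ≥ 2`) with weight numbers `q`, all diagonal
inner products `⟨g i, f i⟩` real and nonnegative, and off-diagonal products
`q i q j ⟨g j, f i⟩⟨g i, f j⟩ = c > 0` constant.  With
`R₁ = max_i q i ⟨g i, f i⟩` and `ζ = {i : q i ⟨g i, f i⟩ = R₁}` containing at least two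
elements, the two-erasure quantity `R₂ᵖ(F,G) = max_{i ≠ j} ρ(E i j)` equals `R₁ + √c`.
Paper's `⟨x, y⟩` (linear in the first argument) is Mathlib's `⟪y, x⟫_ℂ`; the real diagonal
values are written via real parts. -/
theorem two_erasure_value_multiple_max {H : Type*} [NormedAddCommGroup H]
    [InnerProductSpace ℂ H] [FiniteDimensional ℂ H] {n N : ℕ}
    (hn : 1 ≤ n) (hdim : Module.finrank ℂ H = n) (hN : 2 ≤ N)
    (p : Fin N → ℝ) (hp0 : ∀ i, 0 ≤ p i) (hp1 : ∀ i, p i < 1) (hpsum : ∑ i, p i = 1)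
    (q : Fin N → ℝ) (hq : ∀ i, q i = ((N : ℝ) - 1) / ((n : ℝ) * (1 - p i)))
    (F G : Fin N → H)
    (hdual : ∀ f : H, ∑ i, ⟪F i, f⟫_ℂ • G i = f)
    (hreal : ∀ i, ∃ r : ℝ, 0 ≤ r ∧ ⟪F i, G i⟫_ℂ = (r : ℂ))
    (c : ℝ) (hcpos : 0 < c)
    (hoff : ∀ i j, i ≠ j →
      ((q i * q j : ℝ) : ℂ) * ⟪F i, G j⟫_ℂ * ⟪F j, G i⟫_ℂ = (c : ℂ))
    (R1 : ℝ) (hR1 : IsGreatest (Set.range fun i => q i * (⟪F i, G i⟫_ℂ).re) R1)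
    (hzeta : ∃ i j, i ≠ j ∧ q i * (⟪F i, G i⟫_ℂ).re = R1 ∧ q j * (⟪F j, G j⟫_ℂ).re = R1)
    (E : Fin N → Fin N → (H →L[ℂ] H))
    (hE : ∀ i j (f : H),
      E i j f = ((q i : ℂ) * ⟪F i, f⟫_ℂ) • G i + ((q j : ℂ) * ⟪F j, f⟫_ℂ) • G j) :
    (⨆ i, ⨆ j, ⨆ (_ : i ≠ j), spectralRadius ℂ (E i j)) =
      ENNReal.ofReal (R1 + Real.sqrt c) := by
  have hq0 : ∀ i, 0 ≤ q i := fun i => by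
    rw [hq]
    have h1 : (2 : ℝ) ≤ N := by exact_mod_cast hN
    exact div_nonneg (by linarith) (mul_nonneg (Nat.cast_nonneg n) (by linarith [hp1 i]))
  have hdiag : ∀ i, (q i : ℂ) * ⟪F i, G i⟫_ℂ = ((q i * (⟪F i, G i⟫_ℂ).re : ℝ) : ℂ) := fun i => by
    obtain ⟨r, -, hr⟩ := hreal i
    simp [hr]
  have hd0 : ∀ i, 0 ≤ q i * (⟪F i, G i⟫_ℂ).re := fun i => by
    obtain ⟨r, hr0, hr⟩ := hreal i
    rw [hr, Complex.ofReal_re]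
    exact mul_nonneg (hq0 i) hr0
  have hdR : ∀ i, q i * (⟪F i, G i⟫_ℂ).re ≤ R1 := fun i => hR1.2 ⟨i, rfl⟩
  have hoff' : ∀ i j, i ≠ j →
      (q i : ℂ) * (q j : ℂ) * ⟪F i, G j⟫_ℂ * ⟪F j, G i⟫_ℂ = (c : ℂ) := fun i j hij => by
    rw [← hoff i j hij, Complex.ofReal_mul]
  have hs : 0 < √c := Real.sqrt_pos.mpr hcpos
  obtain ⟨i₀, j₀, hij₀, hi₀, hj₀⟩ := hzeta
  have hR0 : 0 ≤ R1 := hi₀ ▸ hd0 i₀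
  apply le_antisymm
  · refine iSup_le fun i => iSup_le fun j => iSup_le fun hij => ?_
    refine iSup₂_le fun z hz => ?_
    obtain ⟨f, hf0, hf⟩ := (mem_spectrum_iff_exists_eigenvector _ _).mp hz
    rw [← ENNReal.ofReal_coe_nnreal, coe_nnnorm]
    apply ENNReal.ofReal_le_ofReal
    rcases eq_or_ne z 0 with rfl | hz0
    · rw [norm_zero]
      positivity
    · rw [hE] at hf
      exact norm_le_of_mul_eq (hd0 i) (hd0 j) (hdR i) (hdR j) hcpos.le
        (eigenvalue_equation (hdiag i) (hdiag j) (hoff' i j hij) hf0 hz0 hf)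
  · have hsc : (√c : ℂ) * (√c : ℂ) = (c : ℂ) := by
      rw [← Complex.ofReal_mul, Real.mul_self_sqrt hcpos.le]
    have hu := hoff' i₀ j₀ hij₀
    have hc0 : (c : ℂ) ≠ 0 := by exact_mod_cast hcpos.ne'
    have hai := hdiag i₀
    have haj := hdiag j₀
    rw [hi₀] at hai
    rw [hj₀] at haj
    set u : ℂ := (q i₀ : ℂ) * ⟪F i₀, G j₀⟫_ℂ with hudef
    have hu0 : u ≠ 0 := by
      intro h
      apply hc0
      rw [← hu]
      linear_combination (q j₀ : ℂ) * ⟪F j₀, G i₀⟫_ℂ * (h - hudef)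
    set f : H := u • G i₀ + (√c : ℂ) • G j₀ with hfdef
    have hx : (q i₀ : ℂ) * ⟪F i₀, f⟫_ℂ = ((R1 + √c : ℝ) : ℂ) * u := by
      rw [hfdef, inner_add_right, inner_smul_right, inner_smul_right]
      push_cast
      linear_combination u * hai - (√c : ℂ) * hudef
    have hy : (q j₀ : ℂ) * ⟪F j₀, f⟫_ℂ = ((R1 + √c : ℝ) : ℂ) * (√c : ℂ) := by
      rw [hfdef, inner_add_right, inner_smul_right, inner_smul_right]
      push_cast
      linear_combination (√c : ℂ) * haj + hu - hsc + (q j₀ : ℂ) * ⟪F j₀, G i₀⟫_ℂ * hudef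
    have hmem : ((R1 + √c : ℝ) : ℂ) ∈ spectrum ℂ (E i₀ j₀) := by
      refine (mem_spectrum_iff_exists_eigenvector _ _).mpr ⟨f, fun hf0 => ?_, ?_⟩
      · rw [hf0, inner_zero_right, mul_zero] at hx
        have hl : ((R1 + √c : ℝ) : ℂ) ≠ 0 := by
          exact_mod_cast (by positivity : R1 + √c ≠ 0)
        exact mul_ne_zero hl hu0 hx.symm
      · rw [hE, hx, hy, hfdef, smul_add, smul_smul, smul_smul]
    calc ENNReal.ofReal (R1 + √c) = (‖((R1 + √c : ℝ) : ℂ)‖₊ : ℝ≥0∞) := by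
          rw [← ENNReal.ofReal_coe_nnreal, coe_nnnorm, Complex.norm_of_nonneg (by positivity)]
      _ ≤ spectralRadius ℂ (E i₀ j₀) :=
          le_iSup₂ (f := fun k (_ : k ∈ spectrum ℂ (E i₀ j₀)) => (‖k‖₊ : ℝ≥0∞)) _ hmem
      _ ≤ _ := le_iSup_of_le i₀ (le_iSup_of_le j₀
          (le_iSup (fun _ : i₀ ≠ j₀ => spectralRadius ℂ (E i₀ j₀)) hij₀))
end

section
/- Let (q_i) be the weight numbers of a probability sequence for an n-dimensional complex Hilbert space H, and let (F,G) be a dual pair in H satisfying max_{1 ≤ i ≤ N} q_i ‖f_i‖ ‖g_i‖ = 1 (i.e. (F,G) is a 1-erasure probabilistic optimal dual pair). Then (F,G) is a probabilistic 1-uniform dual pair: ⟨f_i, g_i⟩ = 1/q_i for every 1 ≤ i ≤ N. -/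
/-!
The traces of the rank-one operators `f ↦ ⟨f, f_i⟩ g_i` add up to the trace of the identity, so
`∑ ⟨g_i, f_i⟩ = n`. The weights are normalised so that `∑ 1 / q_i = n` as well. Optimality and
Cauchy–Schwarz give `|⟨g_i, f_i⟩| ≤ 1 / q_i`. Comparing real parts of the two sums forces
`Re ⟨g_i, f_i⟩ = 1 / q_i` for every `i`, and then the modulus bound leaves no room for an
imaginary part.
-/

open scoped InnerProductSpace

/-- The maximum of a real-valued function on the (nonempty) index set `Fin N`. -/
noncomputable def finMax {N : ℕ} (hN : 0 < N) (f : Fin N → ℝ) : ℝ :=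
  Finset.univ.sup' (Finset.univ_nonempty_iff.mpr (Fin.pos_iff_nonempty.mp hN)) f

lemma sum_inner_eq_finrank {H : Type*} [NormedAddCommGroup H]
    [InnerProductSpace ℂ H] [FiniteDimensional ℂ H] {N : ℕ} (F G : Fin N → H)
    (hdual : ∀ f : H, ∑ i, ⟪F i, f⟫_ℂ • G i = f) :
    ∑ i, ⟪F i, G i⟫_ℂ = (Module.finrank ℂ H : ℂ) := by
  have h : ∑ i, (InnerProductSpace.rankOne ℂ (G i) (F i)).toLinearMap
      = (LinearMap.id : H →ₗ[ℂ] H) := by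
    ext f
    simpa [LinearMap.sum_apply] using hdual f
  have h2 := congrArg (LinearMap.trace ℂ H) h
  rw [map_sum, LinearMap.trace_id] at h2
  simpa [InnerProductSpace.trace_rankOne] using h2

/-- For weight numbers `q` of a probability sequence on an `n`-dimensional
complex Hilbert space, every 1-erasure probabilistic optimal dual pair `(F,G)` (i.e.
a dual pair with `max_i q i ‖f i‖ ‖g i‖ = 1`) is a probabilistic 1-uniform dual pair:
`⟨f i, g i⟩ = 1 / q i` for every `i`.
Paper's `⟨f i, g i⟩` (linear in the first argument) is Mathlib's `⟪G i, F i⟫_ℂ`. -/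
theorem optimal_dual_pair_is_one_uniform {H : Type*} [NormedAddCommGroup H]
    [InnerProductSpace ℂ H] [FiniteDimensional ℂ H] {n N : ℕ}
    (hn : 1 ≤ n) (hdim : Module.finrank ℂ H = n) (hN : 0 < N)
    (p : Fin N → ℝ) (hp0 : ∀ i, 0 ≤ p i) (hp1 : ∀ i, p i < 1) (hpsum : ∑ i, p i = 1)
    (q : Fin N → ℝ) (hq : ∀ i, q i = ((N : ℝ) - 1) / ((n : ℝ) * (1 - p i)))
    (F G : Fin N → H)
    (hdual : ∀ f : H, ∑ i, ⟪F i, f⟫_ℂ • G i = f)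
    (hopt : finMax hN (fun i => q i * ‖F i‖ * ‖G i‖) = 1) :
    ∀ i, ⟪G i, F i⟫_ℂ = ((1 / q i : ℝ) : ℂ) := by
  have hN2 : 2 ≤ N := by
    -- For `N = 1` the single probability would be `1`.
    by_contra hlt
    obtain rfl : N = 1 := by omega
    have h0 := hp1 0
    simp at hpsum
    linarith
  have hNr : (0 : ℝ) < (N : ℝ) - 1 := by
    have : (2 : ℝ) ≤ N := by exact_mod_cast hN2
    linarith
  have hnr : (0 : ℝ) < n := by exact_mod_cast hn
  have hqpos : ∀ i, 0 < q i := fun i => by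
    rw [hq i]
    exact div_pos hNr (mul_pos hnr (by linarith [hp1 i]))
  have hqsum : ∑ i, 1 / q i = (n : ℝ) := by
    have h1 : ∀ i, 1 / q i = (n : ℝ) / ((N : ℝ) - 1) * (1 - p i) := fun i => by
      rw [hq i, one_div_div]
      ring
    simp_rw [h1]
    rw [← Finset.mul_sum, Finset.sum_sub_distrib, hpsum]
    simp only [Finset.sum_const, Finset.card_univ, Fintype.card_fin, nsmul_eq_mul, mul_one]
    field_simp
  have hnorm : ∀ i, ‖⟪G i, F i⟫_ℂ‖ ≤ 1 / q i := fun i => by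
    have h1 : q i * ‖F i‖ * ‖G i‖ ≤ 1 :=
      hopt ▸ Finset.le_sup' (fun i => q i * ‖F i‖ * ‖G i‖) (Finset.mem_univ i)
    rw [le_div_iff₀ (hqpos i)]
    nlinarith [mul_le_mul_of_nonneg_right (norm_inner_le_norm (𝕜 := ℂ) (G i) (F i)) (hqpos i).le]
  have hre_le : ∀ i, (⟪G i, F i⟫_ℂ).re ≤ 1 / q i := fun i =>
    (Complex.re_le_norm _).trans (hnorm i)
  have hresum : ∑ i, (⟪G i, F i⟫_ℂ).re = (n : ℝ) := by
    have h := congrArg Complex.re (sum_inner_eq_finrank F G hdual)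
    rw [Complex.re_sum, hdim, Complex.natCast_re] at h
    rw [← h]
    exact Finset.sum_congr rfl fun i _ => inner_re_symm (𝕜 := ℂ) (G i) (F i)
  have hre : ∀ i, (⟪G i, F i⟫_ℂ).re = 1 / q i := fun i =>
    (Finset.sum_eq_sum_iff_of_le fun i _ => hre_le i).mp (hresum.trans hqsum.symm) i
      (Finset.mem_univ i)
  intro i
  have hre_norm : (⟪G i, F i⟫_ℂ).re = ‖⟪G i, F i⟫_ℂ‖ :=
    le_antisymm (Complex.re_le_norm _) ((hnorm i).trans (hre i).ge)
  have him : (⟪G i, F i⟫_ℂ).im = 0 := by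
    have h := Complex.sq_norm ⟪G i, F i⟫_ℂ
    rw [← hre_norm, Complex.normSq_apply] at h
    nlinarith
  apply Complex.ext
  · rw [hre i, Complex.ofReal_re]
  · rw [him, Complex.ofReal_im]
end
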